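/- Let U : [-1,1] → ℝ be twice continuously differentiable, let c ∈ ℂ with Im c ≠ 0 and ∫_{−1}^{1} (U(z) − c)^{−2} dz ≠ 0, and let h : [-1,1] → ℂ be continuous. Then there exists a unique twice continuously differentiable φ : [-1,1] → ℂ with φ(−1) = φ(1) = 0 and (U(z) − c)·φ″(z) − U″(z)·φ(z) = h(z) for all z ∈ [-1,1]. -/

import Mathlib

open Set

noncomputable section

/-- Derivative within the interval `[-1,1]` (for functions on `[-1,1]`). -/
noncomputable def dI (f : ℝ → ℂ) : ℝ → ℂ := fun z => derivWithin f (Set.Icc (-1:ℝ) 1) z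

/-- Second derivative of `U` within `[-1,1]`. -/
noncomputable def ddU (U : ℝ → ℝ) : ℝ → ℝ :=
  fun z => derivWithin (fun z' => derivWithin U (Set.Icc (-1:ℝ) 1) z') (Set.Icc (-1:ℝ) 1) z

/-- The indefinite integral of a function continuous on `[a, b]` is a primitive within `[a, b]`. -/
theorem hasDerivWithinAt_integral_Icc {a b : ℝ} {f : ℝ → ℂ} (hf : ContinuousOn f (Icc a b))
    {x : ℝ} (hx : x ∈ Icc a b) :
    HasDerivWithinAt (fun u => ∫ t in a..u, f t) (f x) (Icc a b) x := by
  have : Fact (x ∈ Icc a b) := ⟨hx⟩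
  refine intervalIntegral.integral_hasDerivWithinAt_right ?_
    (hf.stronglyMeasurableAtFilter_nhdsWithin measurableSet_Icc x) (hf x hx)
  refine ContinuousOn.intervalIntegrable (hf.mono ?_)
  rw [uIcc_of_le hx.1]
  exact Icc_subset_Icc_right hx.2

/-- A function whose derivative within `[a, b]` vanishes is constant on `[a, b]`. -/
theorem eq_left_of_hasDerivWithinAt_zero {a b : ℝ} {f : ℝ → ℂ}
    (hf : ∀ x ∈ Icc a b, HasDerivWithinAt f 0 (Icc a b) x) {x : ℝ} (hx : x ∈ Icc a b) :
    f x = f a := by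
  have hab : a ≤ b := hx.1.trans hx.2
  rcases hab.eq_or_lt with rfl | hlt
  · rw [Icc_self, mem_singleton_iff] at hx
    rw [hx]
  · exact constant_of_derivWithin_zero (fun y hy => (hf y hy).differentiableWithinAt)
      (fun y hy => (hf y (Ico_subset_Icc_self hy)).derivWithin
        (uniqueDiffOn_Icc hlt y (Ico_subset_Icc_self hy))) x hx

section C2

variable {E : Type*} [NormedAddCommGroup E] [NormedSpace ℝ E] {s : Set ℝ} {f f₁ f₂ : ℝ → E}

/-- A function with two successive derivatives within `s`, the second one continuous, is `C²`. -/
theorem contDiffOn_two_of_hasDerivWithinAt (hs : UniqueDiffOn ℝ s)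
    (h₁ : ∀ x ∈ s, HasDerivWithinAt f (f₁ x) s x)
    (h₂ : ∀ x ∈ s, HasDerivWithinAt f₁ (f₂ x) s x) (h₃ : ContinuousOn f₂ s) :
    ContDiffOn ℝ 2 f s := by
  have e₁ : EqOn (derivWithin f s) f₁ s := fun x hx => (h₁ x hx).derivWithin (hs x hx)
  have e₂ : EqOn (derivWithin f₁ s) f₂ s := fun x hx => (h₂ x hx).derivWithin (hs x hx)
  rw [← one_add_one_eq_two, contDiffOn_succ_iff_derivWithin hs]
  refine ⟨fun x hx => (h₁ x hx).differentiableWithinAt, by simp, ?_⟩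
  refine ContDiffOn.congr ?_ e₁
  exact (contDiffOn_one_iff_derivWithin hs).2
    ⟨fun x hx => (h₂ x hx).differentiableWithinAt, h₃.congr e₂⟩

theorem derivWithin_derivWithin_eq (hs : UniqueDiffOn ℝ s)
    (h₁ : ∀ x ∈ s, HasDerivWithinAt f (f₁ x) s x)
    (h₂ : ∀ x ∈ s, HasDerivWithinAt f₁ (f₂ x) s x) {x : ℝ} (hx : x ∈ s) :
    derivWithin (derivWithin f s) s x = f₂ x := by
  have e₁ : EqOn (derivWithin f s) f₁ s := fun x hx => (h₁ x hx).derivWithin (hs x hx)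
  rw [derivWithin_congr e₁ (e₁ hx)]
  exact (h₂ x hx).derivWithin (hs x hx)

theorem ContDiffOn.hasDerivWithinAt_of_two (hf : ContDiffOn ℝ 2 f s) {x : ℝ} (hx : x ∈ s) :
    HasDerivWithinAt f (derivWithin f s x) s x :=
  (hf.differentiableOn (by norm_num) x hx).hasDerivWithinAt

theorem ContDiffOn.derivWithin_of_two (hs : UniqueDiffOn ℝ s) (hf : ContDiffOn ℝ 2 f s) :
    ContDiffOn ℝ 1 (derivWithin f s) s :=
  hf.derivWithin hs (by norm_num)

theorem ContDiffOn.hasDerivWithinAt_derivWithin_of_two (hs : UniqueDiffOn ℝ s)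
    (hf : ContDiffOn ℝ 2 f s) {x : ℝ} (hx : x ∈ s) :
    HasDerivWithinAt (derivWithin f s) (derivWithin (derivWithin f s) s x) s x :=
  ((hf.derivWithin_of_two hs).differentiableOn (by norm_num) x hx).hasDerivWithinAt

theorem ContDiffOn.continuousOn_derivWithin_derivWithin (hs : UniqueDiffOn ℝ s)
    (hf : ContDiffOn ℝ 2 f s) : ContinuousOn (derivWithin (derivWithin f s) s) s :=
  (hf.derivWithin_of_two hs).continuousOn_derivWithin hs le_rfl

end C2

section Rayleigh

variable {a b : ℝ} {w w₁ w₂ : ℝ → ℂ}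

/-- Variation of constants for `w φ″ - w″ φ = h`: if `G′ = F / w²` and `F′ = h`, then
`φ = w G` has first derivative `w′ G + F / w` and second derivative `w″ G + h / w`. -/
theorem hasDerivWithinAt_mul_primitive {s : Set ℝ} {F G h : ℝ → ℂ}
    (hw : ∀ x ∈ s, w x ≠ 0)
    (h₁ : ∀ x ∈ s, HasDerivWithinAt w (w₁ x) s x)
    (h₂ : ∀ x ∈ s, HasDerivWithinAt w₁ (w₂ x) s x)
    (hF : ∀ x ∈ s, HasDerivWithinAt F (h x) s x)
    (hG : ∀ x ∈ s, HasDerivWithinAt G (F x * (w x ^ 2)⁻¹) s x) {x : ℝ} (hx : x ∈ s) :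
    HasDerivWithinAt (fun z => w z * G z) (w₁ x * G x + F x / w x) s x ∧
      HasDerivWithinAt (fun z => w₁ z * G z + F z / w z) (w₂ x * G x + h x / w x) s x := by
  have hwx := hw x hx
  constructor
  · refine ((h₁ x hx).mul (hG x hx)).congr_deriv ?_
    field_simp
  · refine (((h₂ x hx).mul (hG x hx)).add ((hF x hx).div (h₁ x hx) hwx)).congr_deriv ?_
    field_simp
    ring

/-- The homogeneous equation `w χ″ = w″ χ` with zero boundary values on `[a, b]` has only the
trivial solution when `∫ w⁻² ≠ 0`. -/
theorem eq_zero_of_rayleigh_homogeneous {χ χ₁ χ₂ : ℝ → ℂ} (hab : a ≤ b)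
    (hw : ∀ x ∈ Icc a b, w x ≠ 0)
    (h₁ : ∀ x ∈ Icc a b, HasDerivWithinAt w (w₁ x) (Icc a b) x)
    (h₂ : ∀ x ∈ Icc a b, HasDerivWithinAt w₁ (w₂ x) (Icc a b) x)
    (hint : (∫ z in a..b, (w z ^ 2)⁻¹) ≠ 0)
    (k₁ : ∀ x ∈ Icc a b, HasDerivWithinAt χ (χ₁ x) (Icc a b) x)
    (k₂ : ∀ x ∈ Icc a b, HasDerivWithinAt χ₁ (χ₂ x) (Icc a b) x)
    (hχ : ∀ x ∈ Icc a b, w x * χ₂ x - w₂ x * χ x = 0) (ha : χ a = 0) (hb : χ b = 0)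
    {x : ℝ} (hx : x ∈ Icc a b) : χ x = 0 := by
  have hwc : ContinuousOn w (Icc a b) := fun y hy => (h₁ y hy).continuousWithinAt
  have hinv : ContinuousOn (fun z => (w z ^ 2)⁻¹) (Icc a b) :=
    (hwc.pow 2).inv₀ fun y hy => pow_ne_zero 2 (hw y hy)
  obtain ⟨A, hA⟩ : ∃ A, ∀ y ∈ Icc a b, w y * χ₁ y - w₁ y * χ y = A := by
    refine ⟨_, fun y hy => eq_left_of_hasDerivWithinAt_zero
      (f := fun z => w z * χ₁ z - w₁ z * χ z) (fun z hz => ?_) hy⟩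
    refine (((h₁ z hz).mul (k₂ z hz)).sub ((h₂ z hz).mul (k₁ z hz))).congr_deriv ?_
    linear_combination hχ z hz
  have hquot : ∀ y ∈ Icc a b, χ y / w y = A * ∫ z in a..y, (w z ^ 2)⁻¹ := by
    intro y hy
    have hconst := eq_left_of_hasDerivWithinAt_zero
      (f := fun u => χ u / w u - A * ∫ z in a..u, (w z ^ 2)⁻¹) (fun z hz => by
        have hwz := hw z hz
        refine (((k₁ z hz).div (h₁ z hz) hwz).sub
          ((hasDerivWithinAt_integral_Icc hinv hz).const_mul A)).congr_deriv ?_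
        rw [← hA z hz]
        field_simp
        ring) hy
    simpa [ha, sub_eq_zero] using hconst
  have hA0 : A = 0 := by
    have hAb := hquot b (right_mem_Icc.2 hab)
    rw [hb, zero_div] at hAb
    exact (mul_eq_zero.1 hAb.symm).resolve_right hint
  have hxq := hquot x hx
  rw [hA0, zero_mul, div_eq_zero_iff] at hxq
  exact hxq.resolve_right (hw x hx)

end Rayleigh

/-- Solvability of the nonhomogeneous Rayleigh boundary value problem: if
`∫_{-1}^{1} (U(z) - c)⁻² dz ≠ 0` and `h` is continuous, there is a unique `C²` function
`φ : [-1,1] → ℂ` with `φ(±1) = 0` and `(U(z) - c)·φ″(z) - U″(z)·φ(z) = h(z)` on `[-1,1]`. -/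
theorem rayleigh_bvp_existence_uniqueness (U : ℝ → ℝ)
    (hU : ContDiffOn ℝ 2 U (Set.Icc (-1) 1)) (c : ℂ) (hc : c.im ≠ 0)
    (hdisp : (∫ z in (-1:ℝ)..1, (((U z : ℂ) - c) ^ 2)⁻¹) ≠ 0)
    (h : ℝ → ℂ) (hh : ContinuousOn h (Set.Icc (-1) 1)) :
    ∃ φ : ℝ → ℂ,
      (ContDiffOn ℝ 2 φ (Set.Icc (-1) 1) ∧ φ (-1) = 0 ∧ φ 1 = 0 ∧
        ∀ z ∈ Set.Icc (-1:ℝ) 1,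
          ((U z : ℂ) - c) * dI (dI φ) z - (ddU U z : ℂ) * φ z = h z) ∧
      ∀ ψ : ℝ → ℂ,
        (ContDiffOn ℝ 2 ψ (Set.Icc (-1) 1) ∧ ψ (-1) = 0 ∧ ψ 1 = 0 ∧
          ∀ z ∈ Set.Icc (-1:ℝ) 1,
            ((U z : ℂ) - c) * dI (dI ψ) z - (ddU U z : ℂ) * ψ z = h z) →
        Set.EqOn ψ φ (Set.Icc (-1) 1) := by
  have hs : UniqueDiffOn ℝ (Icc (-1 : ℝ) 1) := uniqueDiffOn_Icc (by norm_num)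
  have hle : (-1 : ℝ) ≤ 1 := by norm_num
  set w : ℝ → ℂ := fun z => (U z : ℂ) - c with hw_def
  have hw : ∀ x ∈ Icc (-1 : ℝ) 1, w x ≠ 0 := fun x _ hx => hc <| by
    simpa [hw_def] using congrArg Complex.im hx
  have h₁ : ∀ x ∈ Icc (-1 : ℝ) 1,
      HasDerivWithinAt w ((derivWithin U (Icc (-1) 1) x : ℝ) : ℂ) (Icc (-1) 1) x := fun x hx =>
    (hU.hasDerivWithinAt_of_two hx).ofReal_comp.sub_const c
  have h₂ : ∀ x ∈ Icc (-1 : ℝ) 1, HasDerivWithinAt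
      (fun z => ((derivWithin U (Icc (-1) 1) z : ℝ) : ℂ)) (ddU U x : ℂ) (Icc (-1) 1) x := fun x hx =>
    (hU.hasDerivWithinAt_derivWithin_of_two hs hx).ofReal_comp
  have hddU : ContinuousOn (fun z => (ddU U z : ℂ)) (Icc (-1) 1) :=
    Complex.continuous_ofReal.comp_continuousOn (hU.continuousOn_derivWithin_derivWithin hs)
  have hwc : ContinuousOn w (Icc (-1) 1) := fun y hy => (h₁ y hy).continuousWithinAt
  have hinv : ContinuousOn (fun z => (w z ^ 2)⁻¹) (Icc (-1) 1) :=
    (hwc.pow 2).inv₀ fun y hy => pow_ne_zero 2 (hw y hy)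
  set H : ℝ → ℂ := fun u => ∫ t in (-1 : ℝ)..u, h t with hH_def
  have hH : ∀ x ∈ Icc (-1 : ℝ) 1, HasDerivWithinAt H (h x) (Icc (-1) 1) x := fun x hx =>
    hasDerivWithinAt_integral_Icc hh hx
  have hHc : ContinuousOn H (Icc (-1) 1) := fun y hy => (hH y hy).continuousWithinAt
  have hHinv : ContinuousOn (fun z => H z * (w z ^ 2)⁻¹) (Icc (-1) 1) := hHc.mul hinv
  set A : ℂ := -(∫ z in (-1 : ℝ)..1, H z * (w z ^ 2)⁻¹) / ∫ z in (-1 : ℝ)..1, (w z ^ 2)⁻¹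
    with hA_def
  set G : ℝ → ℂ := fun u =>
    (∫ z in (-1 : ℝ)..u, H z * (w z ^ 2)⁻¹) + A * ∫ z in (-1 : ℝ)..u, (w z ^ 2)⁻¹ with hG_def
  have hG : ∀ x ∈ Icc (-1 : ℝ) 1,
      HasDerivWithinAt G ((H x + A) * (w x ^ 2)⁻¹) (Icc (-1) 1) x := fun x hx =>
    ((hasDerivWithinAt_integral_Icc hHinv hx).add
      ((hasDerivWithinAt_integral_Icc hinv hx).const_mul A)).congr_deriv (by ring)
  have hGc : ContinuousOn G (Icc (-1) 1) := fun y hy => (hG y hy).continuousWithinAt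
  have hG_left : G (-1) = 0 := by simp [hG_def]
  have hG_right : G 1 = 0 := by
    simp only [hG_def, hA_def]
    rw [div_mul_cancel₀ _ hdisp, add_neg_cancel]
  have hφ := fun x (hx : x ∈ Icc (-1 : ℝ) 1) => hasDerivWithinAt_mul_primitive hw h₁ h₂
    (fun y hy => (hH y hy).add_const A) hG hx
  have hφ₁ := fun x hx => (hφ x hx).1
  have hφ₂ := fun x hx => (hφ x hx).2
  have hφeq : ∀ z ∈ Icc (-1 : ℝ) 1,
      w z * (ddU U z * G z + h z / w z) - ddU U z * (w z * G z) = h z := by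
    intro z hz
    have hwz := hw z hz
    field_simp
    ring
  refine ⟨fun z => w z * G z, ⟨?_, by simp [hG_left], by simp [hG_right], fun z hz => ?_⟩, ?_⟩
  · exact contDiffOn_two_of_hasDerivWithinAt hs hφ₁ hφ₂
      ((hddU.mul hGc).add (hh.div hwc hw))
  · have e : dI (dI fun z => w z * G z) z = _ := derivWithin_derivWithin_eq hs hφ₁ hφ₂ hz
    rw [e]
    exact hφeq z hz
  · rintro ψ ⟨hψ, hψl, hψr, hψeq⟩ x hx
    refine sub_eq_zero.1 (eq_zero_of_rayleigh_homogeneous (χ := fun z => ψ z - w z * G z)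
      hle hw h₁ h₂ hdisp
      (fun y hy => (hψ.hasDerivWithinAt_of_two hy).sub (hφ₁ y hy))
      (fun y hy => (hψ.hasDerivWithinAt_derivWithin_of_two hs hy).sub (hφ₂ y hy))
      (fun y hy => ?_) (by simp [hψl, hG_left]) (by simp [hψr, hG_right]) hx)
    have hψy : w y * derivWithin (derivWithin ψ (Icc (-1) 1)) (Icc (-1) 1) y
        - ddU U y * ψ y = h y := hψeq y hy
    linear_combination hψy - hφeq y hy

end
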